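/- Let d ≥ 1 and let r be a real number with 0 ≤ r < 1. For (i_1, …, i_d) ∈ ℕ^d set S(i_1, …, i_d) = (i_1 + p^{ℓ(i_1)} ℤ_p) × ⋯ × (i_d + p^{ℓ(i_d)} ℤ_p) and e_{(i_1,…,i_d)} = p^{max_{1 ≤ j ≤ d} ⌊ r·ℓ(i_j) ⌋} · 1_{S(i_1,…,i_d)}. Then the family (e_{(i_1,…,i_d)})_{(i_1,…,i_d) ∈ ℕ^d} is a Banach basis of C^r(ℤ_p^d, E) in the following sense: every f ∈ C^r(ℤ_p^d, E) has a unique expansion f = Σ_{(i_1,…,i_d) ∈ ℕ^d} c_{(i_1,…,i_d)} e_{(i_1,…,i_d)} with coefficients c_{(i_1,…,i_d)} ∈ E tending to 0 along the filter of cofinite subsets of ℕ^d, the expansion converges in C^r(ℤ_p^d, E), and the valuation f ↦ inf v_p(c_{(i_1,…,i_d)}) is equivalent to v_{C^r} (defines the same topology). -/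

import Mathlib

/-!
Van der Put's functionals, the alternating sums `vanDerPutCoeff p k` of values of `f` at `k` and at
the points obtained from `k` by deleting leading digits of some coordinates, are dual to the
indicators of the sets `waveletSet p i`. The formula is triangular for the product order of `ℕ^d`,
so by density of `ℕ^d` in `ℤ_p^d` and the ultrametric inequality the sup norm of `f` is the supremum
of its coefficients. Subtracting from `f` its finitely many terms of level at most `m`, which are
invariant under `p^m ℤ_p^d`, shows that the oscillation of `f` modulo `p^m` is bounded by the
coefficients of level greater than `m`; conversely a coefficient of level `L ≥ 1` is an alternating
sum of differences of `f` modulo `p^(L-1)`. So the growth condition defining `C^r` and the decay of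
the coefficients, rescaled by `p^⌊rL⌋`, control each other up to the factors `p^r` and `p`.
-/

open Filter Topology

/-- `ℓ(n)`: `ℓ(0) = 0`, and for `n ≥ 1`, `ℓ(n)` is the unique positive integer with
`p^{ℓ(n)-1} ≤ n < p^{ℓ(n)}`. -/
def ell (p n : ℕ) : ℕ := if n = 0 then 0 else Nat.log p n + 1

/-- `p^{-ε_m(f)}`: the supremum of `‖f (x+y) - f x‖` over `x ∈ ℤ_p^d`, `y ∈ p^m ℤ_p^d`. -/
noncomputable def supDiff {p : ℕ} [Fact p.Prime] (E : Type*) [NormedField E] {d : ℕ}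
    (f : (Fin d → ℤ_[p]) → E) (m : ℕ) : ℝ :=
  ⨆ x : Fin d → ℤ_[p], ⨆ z : Fin d → ℤ_[p], ‖f (x + (p : ℤ_[p]) ^ m • z) - f x‖

/-- `f ∈ C^r(ℤ_p^d, E)`. -/
def MemCr {p : ℕ} [Fact p.Prime] (E : Type*) [NormedField E] {d : ℕ} (r : ℝ)
    (f : (Fin d → ℤ_[p]) → E) : Prop :=
  Continuous f ∧
    Tendsto (fun m : ℕ => supDiff E f m * (p : ℝ) ^ (r * (m : ℝ))) atTop (nhds 0)

/-- The norm `‖f‖_{C^r} = p^{-v_{C^r}(f)}`. -/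
noncomputable def CrNorm {p : ℕ} [Fact p.Prime] (E : Type*) [NormedField E] {d : ℕ} (r : ℝ)
    (f : (Fin d → ℤ_[p]) → E) : ℝ :=
  max (⨆ x : Fin d → ℤ_[p], ‖f x‖) (⨆ m : ℕ, supDiff E f m * (p : ℝ) ^ (r * (m : ℝ)))

/-- `S(i_1, …, i_d) = (i_1 + p^{ℓ(i_1)} ℤ_p) × ⋯ × (i_d + p^{ℓ(i_d)} ℤ_p)`. -/
def waveletSet (p : ℕ) [Fact p.Prime] {d : ℕ} (i : Fin d → ℕ) : Set (Fin d → ℤ_[p]) :=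
  {x | ∀ j : Fin d, ∃ z : ℤ_[p], x j = ((i j : ℕ) : ℤ_[p]) + (p : ℤ_[p]) ^ (ell p (i j)) * z}

/-- `e_{(i_1,…,i_d)} = p^{max_j ⌊r·ℓ(i_j)⌋} · 1_{S(i_1,…,i_d)}`. -/
noncomputable def waveletFn (p : ℕ) [Fact p.Prime] (E : Type*) [NormedField E] {d : ℕ}
    (r : ℝ) (i : Fin d → ℕ) : (Fin d → ℤ_[p]) → E :=
  fun x => (p : E) ^ (Finset.univ.sup fun j : Fin d => (⌊r * (ell p (i j) : ℝ)⌋).toNat) *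
    Set.indicator (waveletSet p i) (fun _ => (1 : E)) x

lemma norm_sub_le_max {M : Type*} [SeminormedAddGroup M] [IsUltrametricDist M] (a b : M) :
    ‖a - b‖ ≤ max ‖a‖ ‖b‖ := by
  simpa [sub_eq_add_neg] using IsUltrametricDist.norm_add_le_max a (-b)

section Digits

variable {p n m : ℕ}

lemma ell_le_iff_lt_pow (hp : 1 < p) : ell p n ≤ m ↔ n < p ^ m := by
  rcases eq_or_ne n 0 with rfl | hn
  · simp [ell, Nat.pow_pos (zero_lt_one.trans hp)]
  · rw [ell, if_neg hn, Nat.add_one_le_iff, Nat.log_lt_iff_lt_pow hp hn]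

lemma ell_pos_iff : 0 < ell p n ↔ n ≠ 0 := by
  by_cases hn : n = 0 <;> simp [ell, hn]

/-- The natural number obtained from `n` by deleting its leading digit in base `p`; for `n = 0` it
is `0`. -/
def dropTopDigit (p n : ℕ) : ℕ := n % p ^ (ell p n - 1)

lemma dropTopDigit_modEq (p n : ℕ) : dropTopDigit p n ≡ n [MOD p ^ (ell p n - 1)] :=
  Nat.mod_modEq _ _

lemma dropTopDigit_le (p n : ℕ) : dropTopDigit p n ≤ n := Nat.mod_le _ _

lemma ell_dropTopDigit_lt (hp : 1 < p) (hn : n ≠ 0) : ell p (dropTopDigit p n) < ell p n := by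
  have hpos : 0 < ell p n := ell_pos_iff.2 hn
  have hle : ell p (dropTopDigit p n) ≤ ell p n - 1 :=
    (ell_le_iff_lt_pow hp).2 (Nat.mod_lt _ (Nat.pow_pos (zero_lt_one.trans hp)))
  omega

end Digits

section MultiIndex

variable {p : ℕ} {ι : Type*}

section Level

variable [Fintype ι]

/-- The level `max_j ℓ(k_j)` of a multi-index `k`. -/
def level (p : ℕ) (k : ι → ℕ) : ℕ := Finset.univ.sup fun j => ell p (k j)

lemma level_le_iff {k : ι → ℕ} {m : ℕ} : level p k ≤ m ↔ ∀ j, ell p (k j) ≤ m := by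
  simp [level]

lemma sup_floor_ell_eq_floor_level {r : ℝ} (hr : 0 ≤ r) (k : ι → ℕ) :
    (Finset.univ.sup fun j => ⌊r * (ell p (k j) : ℝ)⌋.toNat) = ⌊r * level p k⌋₊ := by
  have hmono : Monotone fun l : ℕ => ⌊r * l⌋₊ := fun _ _ h =>
    Nat.floor_mono (mul_le_mul_of_nonneg_left (Nat.cast_le.2 h) hr)
  simp only [Int.floor_toNat]
  exact (Finset.apply_sup_eq_sup_comp_of_linearOrder _ hmono (by simp)).symm

lemma exists_ell_eq_level {k : ι → ℕ} (hk : k ≠ 0) : ∃ j, k j ≠ 0 ∧ ell p (k j) = level p k := by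
  obtain ⟨i, hi⟩ := Function.ne_iff.1 hk
  obtain ⟨j, -, hj⟩ :=
    Finset.exists_mem_eq_sup Finset.univ ⟨i, Finset.mem_univ i⟩ fun j => ell p (k j)
  have hpos : 0 < ell p (k j) :=
    (ell_pos_iff.2 hi).trans_le (hj ▸ level_le_iff.1 le_rfl i : ell p (k i) ≤ ell p (k j))
  exact ⟨j, ell_pos_iff.1 hpos, hj.symm⟩

lemma finite_setOf_level_le (hp : 1 < p) (m : ℕ) : {k : ι → ℕ | level p k ≤ m}.Finite := by
  classical
  exact (Set.finite_Iic fun _ : ι => p ^ m).subset fun _ hk j =>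
    ((ell_le_iff_lt_pow hp).1 (level_le_iff.1 hk j)).le

lemma tendsto_level_cofinite (hp : 1 < p) :
    Tendsto (level p : (ι → ℕ) → ℕ) cofinite atTop := by
  refine tendsto_atTop.2 fun m => (finite_setOf_level_le hp m).subset fun k hk => ?_
  exact (not_le.1 (show ¬m ≤ level p k from hk)).le

end Level

section TruncAt

variable [DecidableEq ι]

/-- The multi-index obtained from `k` by deleting the leading base-`p` digits of the coordinates in
`T`. -/
def truncAt (p : ℕ) (k : ι → ℕ) (T : Finset ι) : ι → ℕ :=
  T.piecewise (fun j => dropTopDigit p (k j)) k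

lemma truncAt_empty (p : ℕ) (k : ι → ℕ) : truncAt p k ∅ = k := Finset.piecewise_empty _ _

lemma truncAt_le (p : ℕ) (k : ι → ℕ) (T : Finset ι) : truncAt p k T ≤ k :=
  Finset.piecewise_le_of_le_of_le _ (fun _ => dropTopDigit_le _ _) le_rfl

lemma truncAt_of_mem {k : ι → ℕ} {T : Finset ι} {j : ι} (hj : j ∈ T) :
    truncAt p k T j = dropTopDigit p (k j) := Finset.piecewise_eq_of_mem _ _ _ hj

lemma ell_truncAt_lt (hp : 1 < p) {k : ι → ℕ} {T : Finset ι} {j : ι} (hj : j ∈ T)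
    (hkj : k j ≠ 0) : ell p (truncAt p k T j) < ell p (k j) :=
  truncAt_of_mem (p := p) hj ▸ ell_dropTopDigit_lt hp hkj

lemma truncAt_insert_modEq {k e : ι → ℕ} {j : ι} (he : e j < ell p (k j)) (T : Finset ι) (i : ι) :
    truncAt p k T i ≡ truncAt p k (insert j T) i [MOD p ^ e i] := by
  rcases eq_or_ne i j with rfl | hij
  · have hdrop : dropTopDigit p (k i) ≡ k i [MOD p ^ e i] :=
      (dropTopDigit_modEq p (k i)).of_dvd (pow_dvd_pow p (Nat.le_sub_one_of_lt he))
    rw [truncAt_of_mem (Finset.mem_insert_self i T)]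
    by_cases hi : i ∈ T
    · rw [truncAt_of_mem hi]
    · rw [truncAt, Finset.piecewise_eq_of_notMem _ _ _ hi]
      exact hdrop.symm
  · rw [truncAt, truncAt, Finset.piecewise_insert_of_ne _ _ _ hij]

end TruncAt

end MultiIndex

section Coefficients

variable {p : ℕ} [Fact p.Prime] {ι : Type*} [Fintype ι] [DecidableEq ι]

lemma pow_dvd_natCast_sub_iff {a b m : ℕ} :
    (p : ℤ_[p]) ^ m ∣ (a : ℤ_[p]) - (b : ℤ_[p]) ↔ a ≡ b [MOD p ^ m] := by
  have h := PadicInt.pow_p_dvd_int_iff (p := p) m ((a : ℤ) - b)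
  push_cast at h
  rw [h, Nat.ModEq.comm, Nat.modEq_iff_dvd]
  push_cast
  rfl

/-- Van der Put's functional: the alternating sum of the values of `f` at the points obtained from
`k` by deleting leading base-`p` digits of some of its nonzero coordinates. Applied to `f` it gives
the coefficient of `1_{S(k)}` in the expansion of `f`. -/
noncomputable def vanDerPutCoeff {M : Type*} [AddCommGroup M] (p : ℕ) [Fact p.Prime]
    (k : ι → ℕ) : ((ι → ℤ_[p]) → M) →+ M where
  toFun f := ∑ T ∈ ({j | k j ≠ 0} : Finset ι).powerset,
    (-1 : ℤˣ) ^ T.card • f fun j => (truncAt p k T j : ℤ_[p])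
  map_zero' := by simp
  map_add' f g := by simp [Finset.sum_add_distrib]

section AddCommGroup

variable {M : Type*} [AddCommGroup M]

lemma vanDerPutCoeff_apply (k : ι → ℕ) (f : (ι → ℤ_[p]) → M) :
    vanDerPutCoeff p k f = ∑ T ∈ ({j | k j ≠ 0} : Finset ι).powerset,
      (-1 : ℤˣ) ^ T.card • f fun j => (truncAt p k T j : ℤ_[p]) := rfl

lemma vanDerPutCoeff_eq_sum_sub {k : ι → ℕ} {j : ι} (hj : k j ≠ 0) (f : (ι → ℤ_[p]) → M) :
    vanDerPutCoeff p k f = ∑ T ∈ (({j | k j ≠ 0} : Finset ι).erase j).powerset,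
      (-1 : ℤˣ) ^ T.card • ((f fun i => (truncAt p k T i : ℤ_[p])) -
        f fun i => (truncAt p k (insert j T) i : ℤ_[p])) := by
  have hmem : j ∈ ({j | k j ≠ 0} : Finset ι) := by simpa using hj
  rw [vanDerPutCoeff_apply]
  nth_rw 1 [← Finset.insert_erase hmem]
  rw [Finset.sum_powerset_insert (Finset.notMem_erase _ _), ← Finset.sum_add_distrib]
  refine Finset.sum_congr rfl fun T hT => ?_
  have hjT : j ∉ T := fun h => Finset.notMem_erase _ _ (Finset.mem_powerset.1 hT h)
  rw [Finset.card_insert_of_notMem hjT, pow_succ, mul_neg_one, Units.neg_smul, ← sub_eq_add_neg,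
    smul_sub]

end AddCommGroup

section Norm

variable {M : Type*} [SeminormedAddCommGroup M] [IsUltrametricDist M] {f : (ι → ℤ_[p]) → M} {B : ℝ}

lemma norm_vanDerPutCoeff_le (h : ∀ x, ‖f x‖ ≤ B) (k : ι → ℕ) : ‖vanDerPutCoeff p k f‖ ≤ B := by
  refine IsUltrametricDist.norm_sum_le_of_forall_le_of_nonneg ((norm_nonneg _).trans (h 0))
    fun T _ => ?_
  rw [norm_units_zsmul]
  exact h _

lemma norm_vanDerPutCoeff_le_of_level {k : ι → ℕ} (hk : k ≠ 0)
    (h : ∀ x y : ι → ℤ_[p], (∀ j, (p : ℤ_[p]) ^ (level p k - 1) ∣ x j - y j) → ‖f x - f y‖ ≤ B) :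
    ‖vanDerPutCoeff p k f‖ ≤ B := by
  obtain ⟨j, hkj, hj⟩ := exists_ell_eq_level (p := p) hk
  have hlt : level p k - 1 < ell p (k j) := hj ▸ Nat.sub_one_lt (ell_pos_iff.2 hkj).ne'
  rw [vanDerPutCoeff_eq_sum_sub hkj]
  refine IsUltrametricDist.norm_sum_le_of_forall_le_of_nonneg
    ((norm_nonneg _).trans (h 0 0 (by simp))) fun T _ => ?_
  rw [norm_units_zsmul]
  exact h _ _ fun i => pow_dvd_natCast_sub_iff.2 (truncAt_insert_modEq (e := fun _ => _) hlt T i)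

lemma norm_apply_natCast_le_of_forall_vanDerPutCoeff (h : ∀ k, ‖vanDerPutCoeff p k f‖ ≤ B)
    (n : ι → ℕ) : ‖f fun j => (n j : ℤ_[p])‖ ≤ B := by
  induction n using WellFoundedLT.induction with
  | ind n ih =>
    have hsplit := Finset.add_sum_erase _
      (fun T => (-1 : ℤˣ) ^ T.card • f fun j => (truncAt p n T j : ℤ_[p]))
      (Finset.empty_mem_powerset ({j | n j ≠ 0} : Finset ι))
    simp only [Finset.card_empty, pow_zero, one_smul, truncAt_empty] at hsplit
    rw [eq_sub_of_add_eq hsplit, ← vanDerPutCoeff_apply]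
    refine (norm_sub_le_max _ _).trans (max_le (h n) ?_)
    refine IsUltrametricDist.norm_sum_le_of_forall_le_of_nonneg ((norm_nonneg _).trans (h n))
      fun T hT => ?_
    rw [norm_units_zsmul]
    obtain ⟨hne, hT⟩ := Finset.mem_erase.1 hT
    obtain ⟨j, hj⟩ := Finset.nonempty_iff_ne_empty.2 hne
    have hnj : n j ≠ 0 := by simpa using Finset.mem_powerset.1 hT hj
    refine ih _ ((truncAt_le p n T).lt_of_ne fun heq => ?_)
    have hlt := ell_truncAt_lt (Fact.out : p.Prime).one_lt hj hnj
    exact hlt.ne (by rw [heq])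

lemma forall_norm_vanDerPutCoeff_le_iff (hf : Continuous f) :
    (∀ k, ‖vanDerPutCoeff p k f‖ ≤ B) ↔ ∀ x, ‖f x‖ ≤ B := by
  refine ⟨fun h x => ?_, norm_vanDerPutCoeff_le⟩
  have hdense : DenseRange fun (n : ι → ℕ) j => (n j : ℤ_[p]) :=
    DenseRange.piMap fun _ => PadicInt.denseRange_natCast
  exact hdense.induction_on (p := fun x => ‖f x‖ ≤ B) x (isClosed_le hf.norm continuous_const)
    (norm_apply_natCast_le_of_forall_vanDerPutCoeff h)

end Norm

end Coefficients

section WaveletSet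

variable {p : ℕ} [Fact p.Prime] {d : ℕ}

lemma mem_waveletSet_iff {i : Fin d → ℕ} {x : Fin d → ℤ_[p]} :
    x ∈ waveletSet p i ↔ ∀ j, (p : ℤ_[p]) ^ ell p (i j) ∣ x j - (i j : ℤ_[p]) :=
  forall_congr' fun _ => exists_congr fun _ => sub_eq_iff_eq_add'.symm

lemma mem_waveletSet_congr {i : Fin d → ℕ} {x y : Fin d → ℤ_[p]}
    (h : ∀ j, (p : ℤ_[p]) ^ ell p (i j) ∣ x j - y j) : x ∈ waveletSet p i ↔ y ∈ waveletSet p i := by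
  simp only [mem_waveletSet_iff]
  refine forall_congr' fun j => ?_
  rw [← sub_add_sub_cancel (x j) (y j), dvd_add_right (h j)]

lemma natCast_mem_waveletSet_iff {i n : Fin d → ℕ} (hn : ∀ j, n j < p ^ ell p (i j)) :
    (fun j => (n j : ℤ_[p])) ∈ waveletSet p i ↔ n = i := by
  have hi : ∀ j, i j < p ^ ell p (i j) := fun _ =>
    (ell_le_iff_lt_pow (Fact.out : p.Prime).one_lt).1 le_rfl
  simp only [mem_waveletSet_iff, pow_dvd_natCast_sub_iff, funext_iff]
  exact forall_congr' fun j => ⟨fun h => h.eq_of_lt_of_lt (hn j) (hi j), fun h => h ▸ rfl⟩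

lemma isClopen_waveletSet (i : Fin d → ℕ) : IsClopen (waveletSet p i) := by
  have hball : ∀ j, IsClopen {x : ℤ_[p] | (p : ℤ_[p]) ^ ell p (i j) ∣ x - (i j : ℤ_[p])} := by
    intro j
    have hradius : (p : ℝ) ^ (-(ell p (i j) : ℤ)) ≠ 0 :=
      zpow_ne_zero _ (Nat.cast_ne_zero.2 (Fact.out : p.Prime).ne_zero)
    convert IsUltrametricDist.isClopen_closedBall (i j : ℤ_[p]) hradius using 1
    ext x
    rw [mem_closedBall_iff_norm, PadicInt.norm_le_pow_iff_mem_span_pow, Ideal.mem_span_singleton,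
      Set.mem_ofPred_eq]
  have hpi : waveletSet p i =
      Set.univ.pi fun j => {x : ℤ_[p] | (p : ℤ_[p]) ^ ell p (i j) ∣ x - (i j : ℤ_[p])} := by
    ext x
    simp [mem_waveletSet_iff]
  rw [hpi]
  exact ⟨isClosed_set_pi fun j _ => (hball j).isClosed,
    isOpen_set_pi Set.finite_univ fun j _ => (hball j).isOpen⟩

lemma continuous_sum_indicator_waveletSet {M : Type*} [TopologicalSpace M] [AddCommMonoid M]
    [ContinuousAdd M] (s : Finset (Fin d → ℕ)) (a : (Fin d → ℕ) → M) :
    Continuous (∑ i ∈ s, (waveletSet p i).indicator fun _ => a i) := by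
  rw [Finset.sum_fn]
  exact continuous_finsetSum _ fun i _ =>
    (isClopen_waveletSet i).continuous_indicator continuous_const

section AddCommGroup

variable {M : Type*} [AddCommGroup M]

lemma vanDerPutCoeff_indicator_waveletSet (i k : Fin d → ℕ) (a : M) :
    vanDerPutCoeff p k ((waveletSet p i).indicator fun _ => a) = if k = i then a else 0 := by
  classical
  have hp := (Fact.out : p.Prime).one_lt
  by_cases hlt : ∃ j, ell p (i j) < ell p (k j)
  · obtain ⟨j, hj⟩ := hlt
    rw [if_neg (by rintro rfl; exact hj.false),
      vanDerPutCoeff_eq_sum_sub (ell_pos_iff.1 (Nat.zero_lt_of_lt hj))]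
    refine Finset.sum_eq_zero fun T _ => ?_
    simp only [Set.indicator_apply, mem_waveletSet_congr fun l =>
      pow_dvd_natCast_sub_iff.2 (truncAt_insert_modEq (e := fun l => ell p (i l)) hj T l),
      sub_self, smul_zero]
  · push Not at hlt
    have hmem : ∀ T, (fun j => (truncAt p k T j : ℤ_[p])) ∈ waveletSet p i ↔ truncAt p k T = i :=
      fun T => natCast_mem_waveletSet_iff fun j =>
        (truncAt_le p k T j).trans_lt ((ell_le_iff_lt_pow hp).1 (hlt j))
    simp only [vanDerPutCoeff_apply, Set.indicator_apply, hmem]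
    rw [Finset.sum_eq_single_of_mem ∅ (Finset.empty_mem_powerset _)]
    · simp [truncAt_empty]
    · intro T hT hne
      obtain ⟨j, hj⟩ := Finset.nonempty_iff_ne_empty.2 hne
      have hkj : k j ≠ 0 := by simpa using Finset.mem_powerset.1 hT hj
      rw [if_neg, smul_zero]
      rintro rfl
      exact (ell_truncAt_lt hp hj hkj).not_ge (hlt j)

lemma vanDerPutCoeff_sub_sum_indicator (f : (Fin d → ℤ_[p]) → M) (s : Finset (Fin d → ℕ))
    (a : (Fin d → ℕ) → M) (k : Fin d → ℕ) :
    vanDerPutCoeff p k (f - ∑ i ∈ s, (waveletSet p i).indicator fun _ => a i) =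
      if k ∈ s then vanDerPutCoeff p k f - a k else vanDerPutCoeff p k f := by
  simp only [map_sub, map_sum, vanDerPutCoeff_indicator_waveletSet, Finset.sum_ite_eq]
  split_ifs <;> simp

end AddCommGroup

lemma norm_sub_le_of_forall_vanDerPutCoeff {M : Type*} [SeminormedAddCommGroup M]
    [IsUltrametricDist M] {f : (Fin d → ℤ_[p]) → M} (hf : Continuous f) {m : ℕ} {B : ℝ}
    (hB : 0 ≤ B) (h : ∀ k, m < level p k → ‖vanDerPutCoeff p k f‖ ≤ B) {x y : Fin d → ℤ_[p]}
    (hxy : ∀ j, (p : ℤ_[p]) ^ m ∣ x j - y j) : ‖f x - f y‖ ≤ B := by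
  classical
  have hfin := finite_setOf_level_le (ι := Fin d) (Fact.out : p.Prime).one_lt m
  set low : (Fin d → ℤ_[p]) → M :=
    ∑ i ∈ hfin.toFinset, (waveletSet p i).indicator fun _ => vanDerPutCoeff p i f with hlow
  have hlow_eq : low x = low y := by
    simp only [hlow, Finset.sum_apply, Set.indicator_apply]
    refine Finset.sum_congr rfl fun i hi => ?_
    have hlevel := level_le_iff.1 (hfin.mem_toFinset.1 hi)
    simp only [mem_waveletSet_congr fun j => (pow_dvd_pow _ (hlevel j)).trans (hxy j)]
  have hcont : Continuous (f - low) := hf.sub (continuous_sum_indicator_waveletSet _ _)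
  have hhigh : ∀ x, ‖(f - low) x‖ ≤ B := by
    refine (forall_norm_vanDerPutCoeff_le_iff hcont).1 fun k => ?_
    rw [vanDerPutCoeff_sub_sum_indicator]
    split_ifs with hk
    · simpa using hB
    · exact h k (not_le.1 fun hle => hk (hfin.mem_toFinset.2 hle))
  calc ‖f x - f y‖ = ‖(f - low) x - (f - low) y‖ := by simp [hlow_eq]
    _ ≤ B := (norm_sub_le_max _ _).trans (max_le (hhigh x) (hhigh y))

end WaveletSet

section Exponents

variable {b r : ℝ}

lemma rpow_mul_le_mul_pow_floor (hb : 1 ≤ b) (hr : 0 ≤ r) {m L : ℕ} (hmL : m ≤ L) :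
    b ^ (r * m) ≤ b * b ^ ⌊r * L⌋₊ := by
  rw [← pow_succ', ← Real.rpow_natCast]
  refine Real.rpow_le_rpow_of_exponent_le hb ?_
  calc r * m ≤ r * L := by gcongr
    _ ≤ (⌊r * L⌋₊ + 1 : ℕ) := by exact_mod_cast (Nat.lt_floor_add_one _).le

lemma pow_floor_le_rpow_mul_rpow (hb : 1 ≤ b) (hr : 0 ≤ r) (L : ℕ) :
    b ^ ⌊r * L⌋₊ ≤ b ^ r * b ^ (r * (L - 1 : ℕ)) := by
  rw [← Real.rpow_natCast, ← Real.rpow_add (zero_lt_one.trans_le hb)]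
  refine Real.rpow_le_rpow_of_exponent_le hb ?_
  have hL : (L : ℝ) ≤ 1 + (L - 1 : ℕ) := by exact_mod_cast (by omega : L ≤ 1 + (L - 1))
  calc (⌊r * L⌋₊ : ℝ) ≤ r * L := Nat.floor_le (by positivity)
    _ ≤ r * (1 + (L - 1 : ℕ)) := by gcongr
    _ = r + r * (L - 1 : ℕ) := by ring

end Exponents

section CrSpace

variable {p : ℕ} [Fact p.Prime] {E : Type*} [NormedField E] {d : ℕ} {f : (Fin d → ℤ_[p]) → E}
  {r B : ℝ} {m : ℕ}

lemma bddAbove_range_norm (hf : Continuous f) : BddAbove (Set.range fun x => ‖f x‖) :=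
  (isCompact_range hf.norm).bddAbove

lemma norm_sub_le_supDiff (hf : BddAbove (Set.range fun x => ‖f x‖)) {x y : Fin d → ℤ_[p]}
    (hxy : ∀ j, (p : ℤ_[p]) ^ m ∣ x j - y j) : ‖f x - f y‖ ≤ supDiff E f m := by
  obtain ⟨C, hC⟩ := hf
  have hdiff : ∀ x y, ‖f x - f y‖ ≤ C + C := fun x y =>
    (norm_sub_le _ _).trans (add_le_add (hC ⟨x, rfl⟩) (hC ⟨y, rfl⟩))
  choose z hz using hxy
  have hx : x = y + (p : ℤ_[p]) ^ m • z := funext fun j => by simp [← hz]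
  rw [hx]
  refine le_ciSup_of_le ⟨C + C, ?_⟩ y (le_ciSup (f := fun z => ‖f (y + (p : ℤ_[p]) ^ m • z) - f y‖)
    ⟨C + C, ?_⟩ z)
  · exact Set.forall_mem_range.2 fun x => ciSup_le fun z => hdiff _ _
  · exact Set.forall_mem_range.2 fun z => hdiff _ _

lemma supDiff_le (h : ∀ x y : Fin d → ℤ_[p], (∀ j, (p : ℤ_[p]) ^ m ∣ x j - y j) → ‖f x - f y‖ ≤ B) :
    supDiff E f m ≤ B :=
  ciSup_le fun x => ciSup_le fun z => h _ _ fun j => by simp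

lemma norm_apply_le_CrNorm (hf : Continuous f) (r : ℝ) (x : Fin d → ℤ_[p]) :
    ‖f x‖ ≤ CrNorm E r f :=
  (le_ciSup (bddAbove_range_norm hf) x).trans (le_max_left _ _)

lemma CrNorm_nonneg (r : ℝ) (f : (Fin d → ℤ_[p]) → E) : 0 ≤ CrNorm E r f :=
  le_max_of_le_left (Real.iSup_nonneg fun _ => norm_nonneg _)

lemma supDiff_mul_le_CrNorm (hf : MemCr E r f) (m : ℕ) :
    supDiff E f m * (p : ℝ) ^ (r * m) ≤ CrNorm E r f :=
  (le_ciSup hf.2.bddAbove_range m).trans (le_max_right _ _)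

variable [IsUltrametricDist E]

lemma CrNorm_le (hr : 0 ≤ r) (hf : Continuous f)
    (h : ∀ k, ‖vanDerPutCoeff p k f‖ * (p : ℝ) ^ ⌊r * level p k⌋₊ ≤ B) : CrNorm E r f ≤ p * B := by
  have hp : (1 : ℝ) ≤ p := Nat.one_le_cast.2 (Fact.out : p.Prime).one_le
  have hB : 0 ≤ B := le_trans (by positivity) (h 0)
  refine max_le (ciSup_le fun x => ?_) (ciSup_le fun m => ?_)
  · refine ((forall_norm_vanDerPutCoeff_le_iff hf).1 (fun k => ?_) x).trans
      (le_mul_of_one_le_left hB hp)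
    exact (le_mul_of_one_le_right (norm_nonneg _) (one_le_pow₀ hp)).trans (h k)
  · rw [← le_div_iff₀ (by positivity)]
    refine supDiff_le fun x y => norm_sub_le_of_forall_vanDerPutCoeff hf (by positivity) ?_
    intro k hk
    rw [le_div_iff₀ (by positivity)]
    calc ‖vanDerPutCoeff p k f‖ * (p : ℝ) ^ (r * m)
        ≤ ‖vanDerPutCoeff p k f‖ * (p * (p : ℝ) ^ ⌊r * level p k⌋₊) := by
          gcongr
          exact rpow_mul_le_mul_pow_floor hp hr hk.le
      _ = p * (‖vanDerPutCoeff p k f‖ * (p : ℝ) ^ ⌊r * level p k⌋₊) := by ring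
      _ ≤ p * B := by gcongr; exact h k

lemma norm_vanDerPutCoeff_mul_pow_le (hr : 0 ≤ r) (hf : Continuous f) {k : Fin d → ℕ}
    (hk : k ≠ 0) : ‖vanDerPutCoeff p k f‖ * (p : ℝ) ^ ⌊r * level p k⌋₊ ≤
      (p : ℝ) ^ r * (supDiff E f (level p k - 1) * (p : ℝ) ^ (r * (level p k - 1 : ℕ))) := by
  have hp : (1 : ℝ) ≤ p := Nat.one_le_cast.2 (Fact.out : p.Prime).one_le
  have hcoeff : ‖vanDerPutCoeff p k f‖ ≤ supDiff E f (level p k - 1) :=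
    norm_vanDerPutCoeff_le_of_level hk fun _ _ => norm_sub_le_supDiff (bddAbove_range_norm hf)
  calc _ ≤ supDiff E f (level p k - 1) * ((p : ℝ) ^ r * (p : ℝ) ^ (r * (level p k - 1 : ℕ))) :=
        mul_le_mul hcoeff (pow_floor_le_rpow_mul_rpow hp hr _) (by positivity)
          ((norm_nonneg _).trans hcoeff)
    _ = _ := mul_left_comm _ _ _

lemma norm_vanDerPutCoeff_mul_pow_le_CrNorm (hr : 0 ≤ r) (hf : MemCr E r f) (k : Fin d → ℕ) :
    ‖vanDerPutCoeff p k f‖ * (p : ℝ) ^ ⌊r * level p k⌋₊ ≤ (p : ℝ) ^ r * CrNorm E r f := by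
  rcases eq_or_ne k 0 with rfl | hk
  · have hp : (1 : ℝ) ≤ p := Nat.one_le_cast.2 (Fact.out : p.Prime).one_le
    have hlevel : level p (0 : Fin d → ℕ) = 0 := by simp [level, ell]
    rw [hlevel, Nat.cast_zero, mul_zero, Nat.floor_zero, pow_zero, mul_one]
    exact (norm_vanDerPutCoeff_le (norm_apply_le_CrNorm hf.1 r) 0).trans
      (le_mul_of_one_le_left (CrNorm_nonneg r f) (Real.one_le_rpow hp hr))
  · refine (norm_vanDerPutCoeff_mul_pow_le hr hf.1 hk).trans ?_
    gcongr
    exact supDiff_mul_le_CrNorm hf _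

lemma tendsto_norm_vanDerPutCoeff_mul_pow (hr : 0 ≤ r) (hf : MemCr E r f) :
    Tendsto (fun k => ‖vanDerPutCoeff p k f‖ * (p : ℝ) ^ ⌊r * level p k⌋₊) cofinite (𝓝 0) := by
  have hlevel : Tendsto (fun k : Fin d → ℕ => level p k - 1) cofinite atTop :=
    (tendsto_sub_atTop_nat 1).comp (tendsto_level_cofinite (Fact.out : p.Prime).one_lt)
  have hbound := (hf.2.comp hlevel).const_mul ((p : ℝ) ^ r)
  rw [mul_zero] at hbound
  refine squeeze_zero' (Eventually.of_forall fun k => by positivity) ?_ hbound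
  filter_upwards [(Set.finite_singleton (0 : Fin d → ℕ)).compl_mem_cofinite] with k hk
  exact norm_vanDerPutCoeff_mul_pow_le hr hf.1 hk

end CrSpace

section Expansion

variable {p : ℕ} [Fact p.Prime] {E : Type*} [NormedField E] {d : ℕ} {f : (Fin d → ℤ_[p]) → E}
  {r : ℝ}

lemma sum_mul_waveletFn (hr : 0 ≤ r) (s : Finset (Fin d → ℕ)) (c : (Fin d → ℕ) → E) :
    (fun x => ∑ i ∈ s, c i * waveletFn p E r i x) =
      ∑ i ∈ s, (waveletSet p i).indicator fun _ => c i * (p : E) ^ ⌊r * level p i⌋₊ := by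
  classical
  ext x
  simp [waveletFn, sup_floor_ell_eq_floor_level hr, Set.indicator_apply]

lemma vanDerPutCoeff_sub_sum_waveletFn (hr : 0 ≤ r) (f : (Fin d → ℤ_[p]) → E)
    (s : Finset (Fin d → ℕ)) (c : (Fin d → ℕ) → E) (k : Fin d → ℕ) :
    vanDerPutCoeff p k (f - fun x => ∑ i ∈ s, c i * waveletFn p E r i x) =
      if k ∈ s then vanDerPutCoeff p k f - c k * (p : E) ^ ⌊r * level p k⌋₊
      else vanDerPutCoeff p k f := by
  rw [sum_mul_waveletFn hr, vanDerPutCoeff_sub_sum_indicator]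

lemma continuous_sub_sum_waveletFn (hr : 0 ≤ r) (hf : Continuous f) (s : Finset (Fin d → ℕ))
    (c : (Fin d → ℕ) → E) : Continuous (f - fun x => ∑ i ∈ s, c i * waveletFn p E r i x) := by
  rw [sum_mul_waveletFn hr]
  exact hf.sub (continuous_sum_indicator_waveletSet _ _)

lemma norm_mul_pow_mul_pow (hpE : ‖(p : E)‖ = (p : ℝ)⁻¹) (a : E) (e : ℕ) :
    ‖a * (p : E) ^ e‖ * (p : ℝ) ^ e = ‖a‖ := by
  have hp : (p : ℝ) ≠ 0 := Nat.cast_ne_zero.2 (Fact.out : p.Prime).ne_zero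
  rw [norm_mul, norm_pow, hpE, inv_pow, inv_mul_cancel_right₀ (pow_ne_zero e hp)]

variable [IsUltrametricDist E] {c : (Fin d → ℕ) → E}

lemma vanDerPutCoeff_eq_of_tendsto (hr : 0 ≤ r) (hf : Continuous f)
    (hc : Tendsto (fun s : Finset (Fin d → ℕ) =>
      CrNorm E r (f - fun x => ∑ i ∈ s, c i * waveletFn p E r i x)) atTop (𝓝 0))
    (k : Fin d → ℕ) : vanDerPutCoeff p k f = c k * (p : E) ^ ⌊r * level p k⌋₊ := by
  rw [← sub_eq_zero, ← norm_le_zero_iff]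
  refine ge_of_tendsto hc ?_
  filter_upwards [eventually_ge_atTop {k}] with s hs
  have h := norm_vanDerPutCoeff_le
    (norm_apply_le_CrNorm (continuous_sub_sum_waveletFn hr hf s c) r) k
  rwa [vanDerPutCoeff_sub_sum_waveletFn hr, if_pos (hs (Finset.mem_singleton_self k))] at h

lemma tendsto_CrNorm_sub_sum_waveletFn (hr : 0 ≤ r) (hpE : ‖(p : E)‖ = (p : ℝ)⁻¹)
    (hf : Continuous f) (hc : Tendsto c cofinite (𝓝 0))
    (hcoeff : ∀ k, vanDerPutCoeff p k f = c k * (p : E) ^ ⌊r * level p k⌋₊) :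
    Tendsto (fun s : Finset (Fin d → ℕ) =>
      CrNorm E r (f - fun x => ∑ i ∈ s, c i * waveletFn p E r i x)) atTop (𝓝 0) := by
  refine Metric.tendsto_nhds.2 fun ε hε => ?_
  obtain ⟨δ, hδ, hδε⟩ := exists_pos_mul_lt hε (p : ℝ)
  have hfin := Filter.eventually_cofinite.1
    ((tendsto_zero_iff_norm_tendsto_zero.1 hc).eventually_lt_const hδ)
  filter_upwards [eventually_ge_atTop hfin.toFinset] with s hs
  rw [dist_zero_right, Real.norm_of_nonneg (CrNorm_nonneg _ _)]
  refine (CrNorm_le hr (continuous_sub_sum_waveletFn hr hf s c) fun k => ?_).trans_lt hδε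
  rw [vanDerPutCoeff_sub_sum_waveletFn hr]
  split_ifs with hk
  · simpa [hcoeff] using hδ.le
  · rw [hcoeff, norm_mul_pow_mul_pow hpE]
    by_contra hlt
    exact hk (hs (hfin.mem_toFinset.2 fun h => hlt h.le))

lemma existsUnique_waveletFn_expansion (hr : 0 ≤ r) (hpE : ‖(p : E)‖ = (p : ℝ)⁻¹)
    (hf : MemCr E r f) :
    ∃! c : (Fin d → ℕ) → E, Tendsto c cofinite (𝓝 0) ∧
      Tendsto (fun s : Finset (Fin d → ℕ) =>
        CrNorm E r (f - fun x => ∑ i ∈ s, c i * waveletFn p E r i x)) atTop (𝓝 0) := by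
  have hpE0 : (p : E) ≠ 0 := norm_ne_zero_iff.1 <| hpE ▸
    inv_ne_zero (Nat.cast_ne_zero.2 (Fact.out : p.Prime).ne_zero)
  have hpow : ∀ k : Fin d → ℕ, (p : E) ^ ⌊r * level p k⌋₊ ≠ 0 := fun _ => pow_ne_zero _ hpE0
  set c : (Fin d → ℕ) → E := fun k => vanDerPutCoeff p k f / (p : E) ^ ⌊r * level p k⌋₊
  have hcoeff : ∀ k, vanDerPutCoeff p k f = c k * (p : E) ^ ⌊r * level p k⌋₊ := fun k =>
    (div_mul_cancel₀ _ (hpow k)).symm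
  have hc : Tendsto c cofinite (𝓝 0) := by
    refine tendsto_zero_iff_norm_tendsto_zero.2
      ((tendsto_norm_vanDerPutCoeff_mul_pow hr hf).congr fun k => ?_)
    rw [hcoeff, norm_mul_pow_mul_pow hpE]
  refine ⟨c, ⟨hc, tendsto_CrNorm_sub_sum_waveletFn hr hpE hf.1 hc hcoeff⟩, fun c' hc' => ?_⟩
  funext k
  exact mul_right_cancel₀ (hpow k)
    ((vanDerPutCoeff_eq_of_tendsto hr hf.1 hc'.2 k).symm.trans (hcoeff k))

lemma norm_le_rpow_mul_CrNorm (hr : 0 ≤ r) (hpE : ‖(p : E)‖ = (p : ℝ)⁻¹) (hf : MemCr E r f)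
    (hcoeff : ∀ k, vanDerPutCoeff p k f = c k * (p : E) ^ ⌊r * level p k⌋₊) (k : Fin d → ℕ) :
    ‖c k‖ ≤ (p : ℝ) ^ r * CrNorm E r f := by
  have h := norm_vanDerPutCoeff_mul_pow_le_CrNorm hr hf k
  rwa [hcoeff, norm_mul_pow_mul_pow hpE] at h

end Expansion

theorem stmt4_general (p : ℕ) [Fact p.Prime] (E : Type*) [NormedField E] [IsUltrametricDist E]
    (hpE : ‖(p : E)‖ = (p : ℝ)⁻¹) (d : ℕ) (r : ℝ) (hr : 0 ≤ r) :
    (∀ f : (Fin d → ℤ_[p]) → E, MemCr E r f →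
      ∃! c : (Fin d → ℕ) → E,
        Tendsto c cofinite (𝓝 0) ∧
        Tendsto (fun s : Finset (Fin d → ℕ) =>
            CrNorm E r (f - fun x => ∑ i ∈ s, c i * waveletFn p E r i x))
          atTop (𝓝 0)) ∧
    ∀ (f : (Fin d → ℤ_[p]) → E) (c : (Fin d → ℕ) → E), MemCr E r f →
      Tendsto (fun s : Finset (Fin d → ℕ) =>
          CrNorm E r (f - fun x => ∑ i ∈ s, c i * waveletFn p E r i x))
        atTop (𝓝 0) →
      (p : ℝ) ^ (-r) * (⨆ i : Fin d → ℕ, ‖c i‖) ≤ CrNorm E r f ∧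
        CrNorm E r f ≤ p * (⨆ i : Fin d → ℕ, ‖c i‖) := by
  refine ⟨fun f hf => existsUnique_waveletFn_expansion hr hpE hf, fun f c hf hc => ?_⟩
  have hp : (0 : ℝ) < p := Nat.cast_pos.2 (Fact.out : p.Prime).pos
  have hcoeff := vanDerPutCoeff_eq_of_tendsto hr hf.1 hc
  have hbound := norm_le_rpow_mul_CrNorm hr hpE hf hcoeff
  constructor
  · rw [Real.rpow_neg hp.le, inv_mul_le_iff₀ (Real.rpow_pos_of_pos hp r)]
    exact ciSup_le hbound
  · refine CrNorm_le hr hf.1 fun k => ?_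
    rw [hcoeff, norm_mul_pow_mul_pow hpE]
    exact le_ciSup (f := fun i => ‖c i‖) ⟨_, Set.forall_mem_range.2 hbound⟩ k

/-- For `d ≥ 1` and `0 ≤ r < 1`, the family `(e_{(i_1,…,i_d)})` indexed by
`ℕ^d` is a Banach basis of `C^r(ℤ_p^d, E)`: every `f ∈ C^r(ℤ_p^d, E)` has a unique expansion
`f = Σ c_i e_i` with coefficients tending to `0` along the cofinite filter on `ℕ^d` and with
the partial sums converging to `f` in `‖·‖_{C^r}`; moreover the valuation
`f ↦ inf_i v_p(c_i)` is equivalent to `v_{C^r}` (the two norms define the same topology). -/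
theorem stmt4 (p : ℕ) [Fact p.Prime] (E : Type*) [NormedField E] [CompleteSpace E]
    [IsUltrametricDist E] [Algebra ℚ_[p] E] [FiniteDimensional ℚ_[p] E]
    (hE : ∀ x : ℚ_[p], ‖algebraMap ℚ_[p] E x‖ = ‖x‖)
    (d : ℕ) (hd : 1 ≤ d) (r : ℝ) (hr0 : 0 ≤ r) (hr1 : r < 1) :
    (∀ f : (Fin d → ℤ_[p]) → E, MemCr E r f →
      ∃! c : (Fin d → ℕ) → E,
        Tendsto c cofinite (nhds 0) ∧
        Tendsto (fun s : Finset (Fin d → ℕ) =>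
            CrNorm E r (f - fun x => ∑ i ∈ s, c i * waveletFn p E r i x))
          atTop (nhds 0)) ∧
    (∃ C₁ C₂ : ℝ, 0 < C₁ ∧ 0 < C₂ ∧
      ∀ (f : (Fin d → ℤ_[p]) → E) (c : (Fin d → ℕ) → E), MemCr E r f →
        Tendsto c cofinite (nhds 0) →
        Tendsto (fun s : Finset (Fin d → ℕ) =>
            CrNorm E r (f - fun x => ∑ i ∈ s, c i * waveletFn p E r i x))
          atTop (nhds 0) →
        C₁ * (⨆ i : Fin d → ℕ, ‖c i‖) ≤ CrNorm E r f ∧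
          CrNorm E r f ≤ C₂ * (⨆ i : Fin d → ℕ, ‖c i‖)) := by
  have hpE : ‖(p : E)‖ = (p : ℝ)⁻¹ := by
    rw [← map_natCast (algebraMap ℚ_[p] E), hE, Padic.norm_p]
  have hp : (0 : ℝ) < p := Nat.cast_pos.2 (Fact.out : p.Prime).pos
  obtain ⟨hexp, hnorm⟩ := stmt4_general p E hpE d r hr0
  exact ⟨hexp, (p : ℝ) ^ (-r), p, Real.rpow_pos_of_pos hp _, hp,
    fun f c hf _ hc => hnorm f c hf hc⟩
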